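/- arXiv:2508.10438 — 9 statements merged into one kernel-verified Lean document; each statement's English description precedes it below -/
import Mathlib

section
/- Let D be a type, 𝒮 a nonempty finite family of finite subsets of D, and c : D → ℤ a cost function with c(d) ≥ 1 for every d ∈ D. Let C = min_{S ∈ 𝒮} Σ_{d ∈ S} c(d). Fix t ∈ D and define c' : D → ℤ by c'(t) = 2·c(t) − 1 and c'(d) = 2·c(d) for all d ≠ t. Then min_{S ∈ 𝒮} Σ_{d ∈ S} c'(d) = 2·C − 1 if there exists S ∈ 𝒮 with t ∈ S and Σ_{d ∈ S} c(d) = C, and min_{S ∈ 𝒮} Σ_{d ∈ S} c'(d) = 2·C otherwise. -/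
/-- cost doubling/decrement trick for membership of a change tuple in
some lowest-cost solution. -/
theorem stmt_0 {D : Type*} [DecidableEq D]
    (𝒮 : Finset (Finset D)) (h𝒮 : 𝒮.Nonempty)
    (c : D → ℤ) (hc : ∀ d, 1 ≤ c d) (t : D)
    (c' : D → ℤ) (hc' : ∀ d, c' d = if d = t then 2 * c t - 1 else 2 * c d)
    (C : ℤ) (hC : C = 𝒮.inf' h𝒮 (fun S => ∑ d ∈ S, c d)) :
    ((∃ S ∈ 𝒮, t ∈ S ∧ ∑ d ∈ S, c d = C) →
        𝒮.inf' h𝒮 (fun S => ∑ d ∈ S, c' d) = 2 * C - 1) ∧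
    ((¬ ∃ S ∈ 𝒮, t ∈ S ∧ ∑ d ∈ S, c d = C) →
        𝒮.inf' h𝒮 (fun S => ∑ d ∈ S, c' d) = 2 * C) := by
  have key : ∀ S : Finset D, ∑ d ∈ S, c' d = 2 * ∑ d ∈ S, c d - (if t ∈ S then 1 else 0) := by
    intro S
    have h1 : ∀ d, c' d = 2 * c d - (if d = t then 1 else 0) := by
      intro d
      rw [hc']
      split_ifs with h
      · rw [h]
      · ring
    simp only [h1, Finset.sum_sub_distrib, Finset.mul_sum, Finset.sum_ite_eq']
  have hle : ∀ S ∈ 𝒮, C ≤ ∑ d ∈ S, c d := by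
    intro S hS
    rw [hC]
    exact Finset.inf'_le (fun S => ∑ d ∈ S, c d) hS
  obtain ⟨S₀, hS₀, h₀⟩ := Finset.exists_mem_eq_inf' h𝒮 (fun S => ∑ d ∈ S, c d)
  rw [← hC] at h₀
  constructor
  · rintro ⟨S, hS, htS, hSC⟩
    apply le_antisymm
    · refine (Finset.inf'_le _ hS).trans ?_
      rw [key, if_pos htS, hSC]
    · refine Finset.le_inf' _ _ ?_
      intro T hT
      have := hle T hT
      rw [key]
      split_ifs <;> omega
  · intro hn
    apply le_antisymm
    · refine (Finset.inf'_le _ hS₀).trans ?_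
      rw [key, ← h₀]
      split_ifs <;> omega
    · refine Finset.le_inf' _ _ ?_
      intro T hT
      have := hle T hT
      rw [key]
      split_ifs with h
      · have : ∑ d ∈ T, c d ≠ C := fun e => hn ⟨T, hT, h, e⟩
        omega
      · omega
end

section
/- Let n ∈ ℕ, D a type, a : Fin n → D an injective map, and c : D → ℤ a cost function with c(a(i)) = 2^{n−1−i} for every i < n and c(d) = 2^n for every d ∈ D not in the range of a. If S and S' are finite subsets of D with Σ_{d∈S} c(d) = Σ_{d∈S'} c(d) ≤ 2^n − 1, then both S and S' are contained in the range of a, and S = S'. -/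
/-- with designated costs 2^{n-1},…,2,1 and all other costs 2^n, any two
subsets of equal total cost at most 2^n − 1 coincide and lie in the designated range. -/
theorem stmt_2 {D : Type*} [DecidableEq D] (n : ℕ) (a : Fin n → D)
    (ha : Function.Injective a) (c : D → ℤ)
    (hca : ∀ i : Fin n, c (a i) = 2 ^ (n - 1 - (i : ℕ)))
    (hcd : ∀ d : D, d ∉ Set.range a → c d = 2 ^ n)
    (S S' : Finset D)
    (hsum : ∑ d ∈ S, c d = ∑ d ∈ S', c d)
    (hbound : ∑ d ∈ S, c d ≤ 2 ^ n - 1) :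
    (↑S : Set D) ⊆ Set.range a ∧ (↑S' : Set D) ⊆ Set.range a ∧ S = S' := by
  have hpos : ∀ d, 0 ≤ c d := by
    intro d
    by_cases h : d ∈ Set.range a
    · obtain ⟨i, rfl⟩ := h
      rw [hca]; positivity
    · rw [hcd d h]; positivity
  have hsub : ∀ R : Finset D, ∑ d ∈ R, c d ≤ 2 ^ n - 1 → (↑R : Set D) ⊆ Set.range a := by
    intro R hR d hd
    by_contra h
    have h1 := Finset.single_le_sum (f := c) (fun x _ => hpos x) (Finset.mem_coe.1 hd)
    rw [hcd d h] at h1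
    linarith
  have hinj : Function.Injective (fun i : Fin n => n - 1 - (i : ℕ)) := by
    intro i j hij
    have := i.2
    have := j.2
    simp only at hij
    ext
    omega
  have key : ∀ R : Finset D, (↑R : Set D) ⊆ Set.range a →
      ∃ T : Finset (Fin n), T.image a = R ∧
        ∑ d ∈ R, c d = ((∑ k ∈ T.image (fun i : Fin n => n - 1 - (i : ℕ)), 2 ^ k : ℕ) : ℤ) := by
    intro R hR
    obtain ⟨T, rfl⟩ : ∃ T : Finset (Fin n), T.image a = R := by
      refine ⟨Finset.univ.filter (fun i => a i ∈ R), ?_⟩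
      ext d
      simp only [Finset.mem_image, Finset.mem_filter, Finset.mem_univ, true_and]
      constructor
      · rintro ⟨i, hi, rfl⟩
        exact hi
      · intro hd
        obtain ⟨i, rfl⟩ := hR hd
        exact ⟨i, hd, rfl⟩
    refine ⟨T, rfl, ?_⟩
    rw [Finset.sum_image ha.injOn, Finset.sum_image hinj.injOn]
    push_cast
    exact Finset.sum_congr rfl (fun i _ => hca i)
  have hS := hsub S hbound
  have hS' := hsub S' (hsum ▸ hbound)
  refine ⟨hS, hS', ?_⟩
  obtain ⟨T, hT, h1⟩ := key S hS
  obtain ⟨T', hT', h2⟩ := key S' hS'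
  rw [h1, h2] at hsum
  have h3 := Finset.geomSum_injective le_rfl (Nat.cast_injective hsum)
  rw [← hT, ← hT', Finset.image_injective hinj h3]
end

section
/- Let a transition system with valuation be given, and let φ be a formula with deg(φ) ≤ n ≤ m. Then every n-max valid sequence satisfies φ if and only if every m-max valid sequence satisfies φ. -/
/-- Formulas of a finite-trace temporal logic over a type `α` of atoms. -/
inductive Formula (α : Type*) : Type _ where
  | atom : α → Formula α
  | and : Formula α → Formula α → Formula α
  | neg : Formula α → Formula α
  | next : Formula α → Formula α

namespace Formula

/-- Disjunction `φ₁ ∨ φ₂` abbreviates `¬(¬φ₁ ∧ ¬φ₂)`. -/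
def or {α : Type*} (f g : Formula α) : Formula α := neg (and (neg f) (neg g))

/-- The degree of a formula: maximal nesting depth of the weak-next operator. -/
def deg {α : Type*} : Formula α → ℕ
  | atom _ => 0
  | and f g => max f.deg g.deg
  | neg f => f.deg
  | next f => f.deg + 1

end Formula

/-- Satisfaction of a formula on the nonempty finite sequence `(σ i, …, σ m)`:
`Sat v σ m φ i` means `φ` holds on `(σ i, …, σ m)`. -/
def Sat {S α : Type*} (v : S → α → Prop) (σ : ℕ → S) (m : ℕ) : Formula α → ℕ → Prop
  | .atom a, i => v (σ i) a
  | .and f g, i => Sat v σ m f i ∧ Sat v σ m g i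
  | .neg f, i => ¬ Sat v σ m f i
  | .next f, i => i = m ∨ (i < m ∧ Sat v σ m f (i + 1))

/-- `nest(φ, ∨, n)`. -/
def nestOr {α : Type*} (φ : Formula α) : ℕ → Formula α
  | 0 => φ
  | n + 1 => φ.or (Formula.next (nestOr φ n))

/-- `nest(φ, ∧, n)`. -/
def nestAnd {α : Type*} (φ : Formula α) : ℕ → Formula α
  | 0 => φ
  | n + 1 => Formula.and φ (Formula.next (nestAnd φ n))

/-- A transition system: states, step relation, terminal states, initial state. -/
structure TransSys (S : Type*) where
  R : S → S → Prop
  T : Set S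
  init : S

/-- The set of blocked states: states with no successor. -/
def TransSys.B {S : Type*} (ts : TransSys S) : Set S := {s | ∀ s', ¬ ts.R s s'}

/-- `(σ 0, …, σ m)` is a valid sequence. -/
def TransSys.Valid {S : Type*} (ts : TransSys S) (σ : ℕ → S) (m : ℕ) : Prop :=
  σ 0 = ts.init ∧ (∀ i < m, ts.R (σ i) (σ (i + 1))) ∧ (∀ i < m, σ i ∉ ts.T)

/-- `(σ 0, …, σ m)` is an `n`-max valid sequence. -/
def TransSys.NMax {S : Type*} (ts : TransSys S) (n : ℕ) (σ : ℕ → S) (m : ℕ) : Prop :=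
  ts.Valid σ m ∧ (m = n ∨ (m < n ∧ σ m ∈ ts.T ∪ ts.B))

/-- The system globally satisfies `φ`: every `deg(φ)`-max valid sequence satisfies `φ`. -/
def GlobSat {S α : Type*} (ts : TransSys S) (v : S → α → Prop) (φ : Formula α) : Prop :=
  ∀ σ m, ts.NMax φ.deg σ m → Sat v σ m φ 0

theorem sat_agree {S α : Type*} (v : S → α → Prop) (σ τ : ℕ → S) (n k l : ℕ)
    (hk : n ≤ k) (hl : n ≤ l) (hst : ∀ i ≤ n, σ i = τ i) (φ : Formula α) :
    ∀ i, i + φ.deg ≤ n → (Sat v σ k φ i ↔ Sat v τ l φ i) := by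
  induction φ with
  | atom a => intro i hi; simp only [Formula.deg] at hi; simp only [Sat]; rw [hst i (by omega)]
  | and f g ihf ihg =>
    intro i hi
    simp only [Formula.deg] at hi
    simp only [Sat]
    rw [ihf i (by omega), ihg i (by omega)]
  | neg f ih =>
    intro i hi
    simp only [Formula.deg] at hi
    simp only [Sat]
    rw [ih i hi]
  | next f ih =>
    intro i hi
    simp only [Formula.deg] at hi
    simp only [Sat]
    rw [ih (i + 1) (by omega)]
    have h1 : i < k := by omega
    have h2 : i < l := by omega
    simp [h1, h2, h1.ne, h2.ne]

theorem step_iff {S α : Type*} (ts : TransSys S) (v : S → α → Prop) (φ : Formula α)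
    (n : ℕ) (h1 : φ.deg ≤ n) :
    (∀ (σ : ℕ → S) (k : ℕ), ts.NMax n σ k → Sat v σ k φ 0) ↔
    (∀ (σ : ℕ → S) (k : ℕ), ts.NMax (n + 1) σ k → Sat v σ k φ 0) := by
  constructor
  · rintro h σ k ⟨⟨h0, hR, hT⟩, hk | ⟨hk, hb⟩⟩
    · subst hk
      exact (sat_agree v σ σ n n (n + 1) le_rfl (by omega) (fun _ _ => rfl) φ 0 (by omega)).1
        (h σ n ⟨⟨h0, fun i hi => hR i (by omega), fun i hi => hT i (by omega)⟩, Or.inl rfl⟩)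
    · apply h σ k
      refine ⟨⟨h0, hR, hT⟩, ?_⟩
      rcases Nat.lt_succ_iff_lt_or_eq.1 hk with h' | h'
      · exact Or.inr ⟨h', hb⟩
      · exact Or.inl h'
  · rintro h σ k ⟨⟨h0, hR, hT⟩, hk | ⟨hk, hb⟩⟩
    · subst hk
      by_cases hb : σ k ∈ ts.T ∪ ts.B
      · exact h σ k ⟨⟨h0, hR, hT⟩, Or.inr ⟨by omega, hb⟩⟩
      · have hnT : σ k ∉ ts.T := fun hx => hb (Or.inl hx)
        have hnB : ∃ s, ts.R (σ k) s := by
          by_contra hc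
          exact hb (Or.inr (fun s hs => hc ⟨s, hs⟩))
        obtain ⟨s, hs⟩ := hnB
        have hag : ∀ i ≤ k, Function.update σ (k + 1) s i = σ i := fun i hi =>
          Function.update_of_ne (by omega) _ _
        refine (sat_agree v (Function.update σ (k + 1) s) σ k (k + 1) k (by omega) le_rfl
          hag φ 0 (by omega)).1 (h _ (k + 1) ⟨⟨?_, ?_, ?_⟩, Or.inl rfl⟩)
        · rw [hag 0 (by omega), h0]
        · intro i hi
          rw [hag i (by omega)]
          rcases Nat.lt_succ_iff_lt_or_eq.1 hi with h' | h'
          · rw [hag (i + 1) (by omega)]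
            exact hR i h'
          · subst h'
            simpa using hs
        · intro i hi
          rw [hag i (by omega)]
          rcases Nat.lt_succ_iff_lt_or_eq.1 hi with h' | h'
          · exact hT i h'
          · subst h'
            exact hnT
    · exact h σ k ⟨⟨h0, hR, hT⟩, Or.inr ⟨by omega, hb⟩⟩

/-- for deg(φ) ≤ n ≤ m, all n-max valid sequences satisfy φ iff all m-max
valid sequences satisfy φ. -/
theorem stmt_5 {S α : Type*} (ts : TransSys S) (v : S → α → Prop) (φ : Formula α)
    (n m : ℕ) (h1 : φ.deg ≤ n) (h2 : n ≤ m) :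
    (∀ (σ : ℕ → S) (k : ℕ), ts.NMax n σ k → Sat v σ k φ 0) ↔
    (∀ (σ : ℕ → S) (k : ℕ), ts.NMax m σ k → Sat v σ k φ 0) := by
  induction m, h2 using Nat.le_induction with
  | base => rfl
  | succ m hm ih => exact ih.trans (step_iff ts v φ m (h1.trans hm))
end

section
/- Let a transition system with valuation be given and let φ₁, …, φ_k (k ≥ 1) be formulas. Then the system globally satisfies the conjunction φ₁ ∧ ⋯ ∧ φ_k if and only if it globally satisfies φ_i for every 1 ≤ i ≤ k. -/
/-- The conjunction φ₁ ∧ ⋯ ∧ φ_k of the nonempty list φ :: l of formulas. -/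
def bigAnd {α : Type*} : Formula α → List (Formula α) → Formula α
  | φ, [] => φ
  | φ, ψ :: l => Formula.and φ (bigAnd ψ l)

theorem sat_congr {S α : Type*} (v : S → α → Prop) (σ σ' : ℕ → S) (m m' : ℕ)
    (φ : Formula α) : ∀ i, i + φ.deg ≤ m → i + φ.deg ≤ m' →
    (∀ j ≤ i + φ.deg, σ j = σ' j) → (Sat v σ m φ i ↔ Sat v σ' m' φ i) := by
  induction φ with
  | atom a =>
    intro i _ _ h
    simp only [Sat]
    rw [h i (by omega)]
  | and f g hf hg =>
    intro i h1 h2 h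
    simp only [Formula.deg] at h1 h2 h
    simp only [Sat]
    rw [hf i (by omega) (by omega) (fun j hj => h j (by omega)),
      hg i (by omega) (by omega) (fun j hj => h j (by omega))]
  | neg f hf =>
    intro i h1 h2 h
    simp only [Formula.deg] at h1 h2 h
    simp only [Sat]
    rw [hf i h1 h2 h]
  | next f hf =>
    intro i h1 h2 h
    simp only [Formula.deg] at h1 h2 h
    simp only [Sat]
    rw [hf (i + 1) (by omega) (by omega) (fun j hj => h j (by omega))]
    have a1 : i ≠ m := by omega
    have a2 : i < m := by omega
    have a3 : i ≠ m' := by omega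
    have a4 : i < m' := by omega
    simp [a1, a2, a3, a4]

theorem extend_nmax {S : Type*} (ts : TransSys S) (k : ℕ) : ∀ (σ : ℕ → S) (m : ℕ),
    ts.Valid σ m → ∃ σ' m', m ≤ m' ∧ (∀ j ≤ m, σ j = σ' j) ∧ ts.NMax (m + k) σ' m' := by
  induction k with
  | zero => exact fun σ m h => ⟨σ, m, le_rfl, fun _ _ => rfl, h, Or.inl rfl⟩
  | succ k ih =>
    intro σ m h
    by_cases hb : σ m ∈ ts.T ∪ ts.B
    · exact ⟨σ, m, le_rfl, fun _ _ => rfl, h, Or.inr ⟨by omega, hb⟩⟩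
    · have hT : σ m ∉ ts.T := fun x => hb (Or.inl x)
      have hB : ∃ s, ts.R (σ m) s := by
        by_contra hc
        exact hb (Or.inr (fun s hs => hc ⟨s, hs⟩))
      obtain ⟨s, hs⟩ := hB
      obtain ⟨h0, hR, hT'⟩ := h
      have hv : ts.Valid (fun j => if j ≤ m then σ j else s) (m + 1) := by
        refine ⟨by simpa using h0, fun i hi => ?_, fun i hi => ?_⟩
        · rcases Nat.lt_succ_iff_lt_or_eq.mp hi with h | h
          · have a : i ≤ m := by omega
            have b : i + 1 ≤ m := by omega
            simpa [a, b] using hR i h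
          · subst h
            simpa using hs
        · have a : i ≤ m := by omega
          rcases Nat.lt_succ_iff_lt_or_eq.mp hi with h | h
          · simpa [a] using hT' i h
          · subst h
            simpa using hT
      obtain ⟨σ', m', h1, h2, h3⟩ := ih _ _ hv
      refine ⟨σ', m', by omega, fun j hj => ?_, ?_⟩
      · have := h2 j (by omega)
        simpa [hj] using this
      · rwa [show m + (k + 1) = m + 1 + k by omega]

theorem globSat_iff {S α : Type*} (ts : TransSys S) (v : S → α → Prop)
    (φ : Formula α) (n : ℕ) (hn : φ.deg ≤ n) :
    GlobSat ts v φ ↔ ∀ σ m, ts.NMax n σ m → Sat v σ m φ 0 := by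
  constructor
  · intro h σ m hm
    obtain ⟨hv, hm⟩ := hm
    by_cases hd : φ.deg ≤ m
    · have := h σ φ.deg ⟨⟨hv.1, fun i hi => hv.2.1 i (by omega),
        fun i hi => hv.2.2 i (by omega)⟩, Or.inl rfl⟩
      exact (sat_congr v σ σ φ.deg m φ 0 (by omega) (by omega) (fun _ _ => rfl)).1 this
    · refine h σ m ⟨hv, Or.inr ⟨by omega, ?_⟩⟩
      rcases hm with hm | hm
      · omega
      · exact hm.2
  · intro h σ m hm
    obtain ⟨hv, hm⟩ := hm
    rcases hm with hm | hm
    · obtain ⟨σ', m', h1, h2, h3⟩ := extend_nmax ts (n - m) σ m hv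
      rw [show m + (n - m) = n by omega] at h3
      exact (sat_congr v σ σ' m m' φ 0 (by omega) (by omega)
        (fun j hj => h2 j (by omega))).2 (h σ' m' h3)
    · exact h σ m ⟨hv, Or.inr ⟨by omega, hm.2⟩⟩

theorem globSat_and {S α : Type*} (ts : TransSys S) (v : S → α → Prop)
    (f g : Formula α) : GlobSat ts v (f.and g) ↔ GlobSat ts v f ∧ GlobSat ts v g := by
  rw [globSat_iff ts v f (f.and g).deg (le_max_left _ _),
    globSat_iff ts v g (f.and g).deg (le_max_right _ _)]
  exact ⟨fun h => ⟨fun σ m hm => (h σ m hm).1, fun σ m hm => (h σ m hm).2⟩,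
    fun h σ m hm => ⟨h.1 σ m hm, h.2 σ m hm⟩⟩

/-- the system globally satisfies the conjunction φ₁ ∧ ⋯ ∧ φ_k (k ≥ 1)
iff it globally satisfies each φ_i. -/
theorem stmt_6 {S α : Type*} (ts : TransSys S) (v : S → α → Prop)
    (φ : Formula α) (l : List (Formula α)) :
    GlobSat ts v (bigAnd φ l) ↔ ∀ ψ ∈ φ :: l, GlobSat ts v ψ := by
  induction l generalizing φ with
  | nil => simp [bigAnd]
  | cons ψ l ih =>
    rw [bigAnd, globSat_and, ih ψ, List.forall_mem_cons (a := φ)]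
end

section
/- Let φ be a formula, n ∈ ℕ, and (S_0, …, S_m) a nonempty finite sequence of states with m ≤ n. Then nest(φ, ∨, n) holds on (S_0, …, S_m) if and only if m < n, or there exists i ≤ m such that φ holds on the suffix (S_i, …, S_m). -/
theorem stmt_7_aux {S α : Type*} (v : S → α → Prop) (φ : Formula α) (σ : ℕ → S) (m : ℕ) (n : ℕ) :
    ∀ k, k ≤ m → m ≤ k + n →
    (Sat v σ m (nestOr φ n) k ↔ (m < k + n ∨ ∃ i, k ≤ i ∧ i ≤ m ∧ Sat v σ m φ i)) := by
  induction n with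
  | zero =>
    intro k hk hm
    have : k = m := by omega
    subst this
    simp only [nestOr, Nat.add_zero, lt_irrefl, false_or]
    constructor
    · intro h
      exact ⟨k, le_refl _, le_refl _, h⟩
    · rintro ⟨i, h1, h2, h⟩
      have : i = k := by omega
      exact this ▸ h
  | succ n ih =>
    intro k hk hm
    have e : Sat v σ m (nestOr φ (n + 1)) k ↔
        (Sat v σ m φ k ∨ k = m ∨ (k < m ∧ Sat v σ m (nestOr φ n) (k + 1))) := by
      simp only [nestOr, Formula.or, Sat]
      tauto
    rw [e]
    rcases Nat.eq_or_lt_of_le hk with h | h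
    · exact ⟨fun _ => Or.inl (by omega), fun _ => Or.inr (Or.inl h)⟩
    · rw [ih (k + 1) h (by omega)]
      constructor
      · rintro (h1 | h1 | ⟨_, h1 | ⟨i, h2, h3, h4⟩⟩)
        · exact Or.inr ⟨k, le_refl _, hk, h1⟩
        · omega
        · exact Or.inl (by omega)
        · exact Or.inr ⟨i, by omega, h3, h4⟩
      · rintro (h1 | ⟨i, h2, h3, h4⟩)
        · exact Or.inr (Or.inr ⟨h, Or.inl (by omega)⟩)
        · rcases Nat.eq_or_lt_of_le h2 with h5 | h5
          · exact Or.inl (h5 ▸ h4)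
          · exact Or.inr (Or.inr ⟨h, Or.inr ⟨i, h5, h3, h4⟩⟩)

/-- for m ≤ n, nest(φ, ∨, n) holds on (S_0, …, S_m) iff m < n or φ holds
on some suffix (S_i, …, S_m). -/
theorem stmt_7 {S α : Type*} (v : S → α → Prop) (φ : Formula α) (n : ℕ)
    (σ : ℕ → S) (m : ℕ) (hm : m ≤ n) :
    Sat v σ m (nestOr φ n) 0 ↔ (m < n ∨ ∃ i ≤ m, Sat v σ m φ i) := by
  simpa using stmt_7_aux v φ σ m n 0 (Nat.zero_le _) (by omega)
end

section
/- Let φ be a formula, n ∈ ℕ, and (S_0, …, S_m) a nonempty finite sequence of states with m ≤ n. Then nest(φ, ∧, n) holds on (S_0, …, S_m) if and only if for every i ≤ m, φ holds on the suffix (S_i, …, S_m). -/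
theorem sat_nestAnd_aux {S α : Type*} (v : S → α → Prop) (φ : Formula α) (σ : ℕ → S) (m : ℕ) :
    ∀ (n k : ℕ), k ≤ m → m ≤ k + n →
      (Sat v σ m (nestAnd φ n) k ↔ ∀ i, k ≤ i → i ≤ m → Sat v σ m φ i) := by
  intro n
  induction n with
  | zero =>
    intro k hk hm
    constructor
    · intro h i h1 h2
      obtain rfl : i = k := by omega
      exact h
    · intro h
      exact h k le_rfl hk
  | succ n ih =>
    intro k hk hm
    simp only [nestAnd, Sat]
    constructor
    · rintro ⟨h, h'⟩ i h1 h2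
      rcases Nat.eq_or_lt_of_le h1 with rfl | h3
      · exact h
      · rcases h' with h' | ⟨h4, h5⟩
        · omega
        · exact (ih (k + 1) h4 (by omega)).1 h5 i h3 h2
    · intro h
      refine ⟨h k le_rfl hk, ?_⟩
      rcases Nat.eq_or_lt_of_le hk with h1 | h1
      · exact Or.inl h1
      · exact Or.inr ⟨h1, (ih (k + 1) h1 (by omega)).2
          fun i h2 h3 => h i (by omega) h3⟩

/-- for m ≤ n, nest(φ, ∧, n) holds on (S_0, …, S_m) iff φ holds on every
suffix (S_i, …, S_m). -/
theorem stmt_8 {S α : Type*} (v : S → α → Prop) (φ : Formula α) (n : ℕ)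
    (σ : ℕ → S) (m : ℕ) (hm : m ≤ n) :
    Sat v σ m (nestAnd φ n) 0 ↔ ∀ i ≤ m, Sat v σ m φ i := by
  rw [sat_nestAnd_aux v φ σ m n 0 (Nat.zero_le _) (by omega)]
  exact ⟨fun h i hi => h i (Nat.zero_le _) hi, fun h i _ hi => h i hi⟩
end

section
/- Let a transition system with valuation v be given, and let 'terminal' be an atom such that v s terminal holds if and only if s ∈ T, for every state s. Then for every n ∈ ℕ, the system globally satisfies nest(terminal, ∨, n) if and only if every valid sequence (S_0, …, S_n) of exactly n steps ends in a terminal state, i.e. S_n ∈ T. -/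
theorem nestOr_deg_aux {α : Type*} (a : α) (n : ℕ) :
    (nestOr (Formula.atom a) n).deg = n := by
  induction n with
  | zero => rfl
  | succ n ih => simp [nestOr, Formula.or, Formula.deg, ih]

theorem sat_nestOr_aux {S α : Type*} (v : S → α → Prop) (σ : ℕ → S) (m : ℕ) (a : α) (n : ℕ) :
    ∀ i, i ≤ m → (Sat v σ m (nestOr (Formula.atom a) n) i ↔
      (m < i + n ∨ ∃ j, i ≤ j ∧ j ≤ i + n ∧ v (σ j) a)) := by
  induction n with
  | zero =>
    intro i hi
    simp only [nestOr, Sat]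
    constructor
    · intro h
      exact Or.inr ⟨i, le_refl _, le_refl _, h⟩
    · rintro (h | ⟨j, h1, h2, h3⟩)
      · omega
      · obtain rfl : j = i := by omega
        exact h3
  | succ n ih =>
    intro i hi
    have key : Sat v σ m (nestOr (Formula.atom a) (n + 1)) i ↔
        (v (σ i) a ∨ (i = m ∨ (i < m ∧ Sat v σ m (nestOr (Formula.atom a) n) (i + 1)))) := by
      simp only [nestOr, Formula.or, Sat]
      tauto
    rw [key]
    constructor
    · rintro (h | h | ⟨h, h'⟩)
      · exact Or.inr ⟨i, le_refl _, by omega, h⟩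
      · left; omega
      · rcases (ih (i + 1) h).1 h' with h2 | ⟨j, h1, h2, h3⟩
        · left; omega
        · exact Or.inr ⟨j, by omega, by omega, h3⟩
    · intro h
      rcases hi.eq_or_lt with h0 | h0
      · exact Or.inr (Or.inl h0)
      · rcases h with h | ⟨j, h1, h2, h3⟩
        · exact Or.inr (Or.inr ⟨h0, (ih (i + 1) h0).2 (Or.inl (by omega))⟩)
        · rcases h1.eq_or_lt with h4 | h4
          · subst h4
            exact Or.inl h3
          · exact Or.inr (Or.inr ⟨h0, (ih (i + 1) h0).2 (Or.inr ⟨j, h4, by omega, h3⟩)⟩)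

/-- the system globally satisfies nest(terminal, ∨, n) iff every valid
sequence of exactly n steps ends in a terminal state. -/
theorem stmt_10 {S α : Type*} (ts : TransSys S) (v : S → α → Prop) (terminal : α)
    (hv : ∀ s, v s terminal ↔ s ∈ ts.T) (n : ℕ) :
    GlobSat ts v (nestOr (Formula.atom terminal) n) ↔
      ∀ σ : ℕ → S, ts.Valid σ n → σ n ∈ ts.T := by
  unfold GlobSat
  rw [nestOr_deg_aux]
  constructor
  · intro h σ hσ
    rcases (sat_nestOr_aux v σ n terminal n 0 (Nat.zero_le _)).1 (h σ n ⟨hσ, Or.inl rfl⟩) with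
      h1 | ⟨j, _, h2, h3⟩
    · omega
    · rw [hv] at h3
      rcases (show j ≤ n by omega).eq_or_lt with h4 | h4
      · exact h4 ▸ h3
      · exact absurd h3 (hσ.2.2 j h4)
  · rintro h σ m ⟨hσ, hm⟩
    apply (sat_nestOr_aux v σ m terminal n 0 (Nat.zero_le _)).2
    rcases hm with rfl | ⟨hm, _⟩
    · exact Or.inr ⟨m, by omega, by omega, (hv _).2 (h σ hσ)⟩
    · left; omega
end

section
/- Let a transition system with valuation v be given, let 'terminal' be an atom such that v s terminal holds if and only if s ∈ T for every state s, and let g be any atom. Then for every n ∈ ℕ, the system does NOT globally satisfy nest(¬terminal ∨ ¬g, ∧, n) if and only if there exists an n-max valid sequence (S_0, …, S_m) such that S_m ∈ T and v S_m g holds. -/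
theorem sat_nestAnd {S α : Type*} (v : S → α → Prop) (σ : ℕ → S) (m : ℕ) (φ : Formula α)
    (n : ℕ) : ∀ i, i ≤ m →
      (Sat v σ m (nestAnd φ n) i ↔ ∀ j, i ≤ j → j ≤ m → j ≤ i + n → Sat v σ m φ j) := by
  induction n with
  | zero =>
    intro i hi
    constructor
    · intro h j h1 h2 h3
      obtain rfl : j = i := by omega
      exact h
    · intro h
      exact h i le_rfl hi le_rfl
  | succ n ih =>
    intro i hi
    simp only [nestAnd, Sat]
    constructor
    · rintro ⟨h0, h⟩ j h1 h2 h3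
      rcases Nat.eq_or_lt_of_le h1 with rfl | h4
      · exact h0
      · rcases h with h | ⟨h5, h⟩
        · omega
        · exact (ih (i + 1) h5).1 h j h4 h2 (by omega)
    · intro h
      refine ⟨h i le_rfl hi (by omega), ?_⟩
      rcases Nat.eq_or_lt_of_le hi with h4 | h4
      · exact Or.inl h4
      · exact Or.inr ⟨h4, (ih (i + 1) h4).2 fun j h1 h2 h3 =>
          h j (by omega) h2 (by omega)⟩

theorem deg_nestAnd {α : Type*} (φ : Formula α) (hφ : φ.deg = 0) (n : ℕ) :
    (nestAnd φ n).deg = n := by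
  induction n with
  | zero => exact hφ
  | succ n ih => simp [nestAnd, Formula.deg, ih, hφ]

/-- the system does not globally satisfy nest(¬terminal ∨ ¬g, ∧, n) iff
some n-max valid sequence ends in a terminal state where g holds. -/
theorem stmt_11 {S α : Type*} (ts : TransSys S) (v : S → α → Prop) (terminal g : α)
    (hv : ∀ s, v s terminal ↔ s ∈ ts.T) (n : ℕ) :
    ¬ GlobSat ts v
        (nestAnd (Formula.or (Formula.neg (Formula.atom terminal))
          (Formula.neg (Formula.atom g))) n) ↔
      ∃ (σ : ℕ → S) (m : ℕ), ts.NMax n σ m ∧ σ m ∈ ts.T ∧ v (σ m) g := by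
  unfold GlobSat
  rw [deg_nestAnd _ (by simp [Formula.or, Formula.deg])]
  have key : ∀ σ m, ts.NMax n σ m → (¬ Sat v σ m (nestAnd (Formula.or
      (Formula.neg (Formula.atom terminal)) (Formula.neg (Formula.atom g))) n) 0 ↔
      σ m ∈ ts.T ∧ v (σ m) g) := by
    intro σ m h
    have hmn : m ≤ n := by rcases h.2 with h | h <;> omega
    rw [sat_nestAnd _ _ _ _ _ _ (Nat.zero_le m)]
    simp only [Formula.or, Sat, hv, not_not]
    constructor
    · intro h'
      push Not at h'
      obtain ⟨j, -, h2, -, h4, h5⟩ := h'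
      rcases Nat.eq_or_lt_of_le h2 with rfl | h6
      · exact ⟨h4, h5⟩
      · exact absurd h4 (h.1.2.2 j h6)
    · intro h1 h2
      exact h2 m (Nat.zero_le m) le_rfl (by omega) h1
  constructor
  · intro h
    by_contra hc
    apply h
    intro σ m hm
    by_contra hs
    exact hc ⟨σ, m, hm, (key σ m hm).1 hs⟩
  · rintro ⟨σ, m, hm, h⟩ hall
    exact (key σ m hm).2 h (hall σ m hm)
end

section
/- Let D be a finite type with N elements enumerated d_1, …, d_N, let 𝒮 be a nonempty family of subsets of D, and let c : D → ℤ satisfy c(d) ≥ 1 for all d ∈ D. Define c' : D → ℤ by c'(d_j) = 2^N · c(d_j) − 2^{N−j} for each 1 ≤ j ≤ N. Then there is a unique S* ∈ 𝒮 minimizing Σ_{d∈S} c'(d) over S ∈ 𝒮, and this S* also minimizes Σ_{d∈S} c(d) over S ∈ 𝒮. -/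
/-- the isolation perturbation c'(d_j) = 2^N·c(d_j) − 2^{N−j} yields a
unique minimizer, which also minimizes the original cost c. -/
theorem stmt_13 {D : Type*} [Fintype D] [DecidableEq D] (N : ℕ)
    (d : Fin N → D) (hd : Function.Bijective d)
    (𝒮 : Finset (Finset D)) (h𝒮 : 𝒮.Nonempty)
    (c : D → ℤ) (hc : ∀ x, 1 ≤ c x)
    (c' : D → ℤ)
    (hc' : ∀ j : Fin N, c' (d j) = 2 ^ N * c (d j) - 2 ^ (N - 1 - (j : ℕ))) :
    ∃ S ∈ 𝒮,
      (∀ S' ∈ 𝒮, ∑ x ∈ S, c' x ≤ ∑ x ∈ S', c' x) ∧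
      (∀ S' ∈ 𝒮, (∀ S'' ∈ 𝒮, ∑ x ∈ S', c' x ≤ ∑ x ∈ S'', c' x) → S' = S) ∧
      (∀ S' ∈ 𝒮, ∑ x ∈ S, c x ≤ ∑ x ∈ S', c x) := by
  obtain ⟨e, he, heN, hce⟩ : ∃ e : D → ℕ, Function.Injective e ∧ (∀ x, e x < N) ∧
      ∀ x, c' x = 2 ^ N * c x - 2 ^ (e x) := by
    let E := Equiv.ofBijective d hd
    have hE : ∀ x, d (E.symm x) = x := fun x => E.apply_symm_apply x
    refine ⟨fun x => N - 1 - (E.symm x : ℕ), ?_, ?_, ?_⟩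
    · intro x y hxy
      apply E.symm.injective
      apply Fin.ext
      have h1 := (E.symm x).isLt
      have h2 := (E.symm y).isLt
      simp only at hxy
      omega
    · intro x
      have h1 := (E.symm x).isLt
      simp only
      omega
    · intro x
      have h := hc' (E.symm x)
      rw [hE] at h
      exact h
  have hw : ∀ S : Finset D, ∑ k ∈ S.image e, 2 ^ k = ∑ x ∈ S, 2 ^ (e x) := fun S =>
    Finset.sum_image (fun x _ y _ h => he h)
  have hlt : ∀ S : Finset D, ((∑ k ∈ S.image e, 2 ^ k : ℕ) : ℤ) < 2 ^ N := by
    intro S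
    have h : ∑ k ∈ S.image e, 2 ^ k < 2 ^ N := Nat.geomSum_lt le_rfl (by
      intro k hk
      obtain ⟨x, _, rfl⟩ := Finset.mem_image.1 hk
      exact heN x)
    exact_mod_cast h
  have hsum : ∀ S : Finset D, ∑ x ∈ S, c' x =
      2 ^ N * ∑ x ∈ S, c x - ((∑ k ∈ S.image e, 2 ^ k : ℕ) : ℤ) := by
    intro S
    rw [hw, Finset.sum_congr rfl (fun x _ => hce x), Finset.sum_sub_distrib, Finset.mul_sum]
    push_cast
    rfl
  have key : ∀ S T : Finset D, ∑ x ∈ S, c' x ≤ ∑ x ∈ T, c' x →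
      ∑ x ∈ S, c x ≤ ∑ x ∈ T, c x := by
    intro S T h
    rw [hsum, hsum] at h
    by_contra! hcon
    have h1 := hlt S
    have h2 : (0 : ℤ) ≤ ((∑ k ∈ T.image e, 2 ^ k : ℕ) : ℤ) := Int.natCast_nonneg _
    have h3 : (0 : ℤ) < 2 ^ N := by positivity
    nlinarith
  obtain ⟨S, hS, hmin⟩ := Finset.exists_min_image 𝒮 (fun S => ∑ x ∈ S, c' x) h𝒮
  refine ⟨S, hS, hmin, ?_, fun S' hS' => key _ _ (hmin S' hS')⟩
  intro T hT hTmin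
  have h1 := hTmin S hS
  have h2 := hmin T hT
  have h3 := le_antisymm (key _ _ h1) (key _ _ h2)
  have h4 := le_antisymm h1 h2
  rw [hsum, hsum, h3] at h4
  have h5 : ∑ k ∈ T.image e, 2 ^ k = ∑ k ∈ S.image e, 2 ^ k := by
    have := sub_right_injective h4
    exact_mod_cast this
  exact Finset.image_injective he (Finset.geomSum_injective le_rfl h5)
end
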